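/- For every Boolean function f : {0,1}^n → {0,1} with expectation μ = E f satisfying 0 < μ < 1, one has Σ_{i=1}^n I_i(f)² ≥ 4 μ(1−μ) · exp( − (1/(2μ(1−μ))) · Σ_{i=1}^n I_i(f) ). -/

import Mathlib

open Finset

/-- Expectation with respect to the uniform measure on the discrete cube `{0,1}^n`. -/
noncomputable def cubeE {n : ℕ} (f : (Fin n → Bool) → ℝ) : ℝ :=
  (∑ x : Fin n → Bool, f x) / 2 ^ n

/-- `x ⊕ e_i` : flip the `i`-th coordinate of `x`. -/
def flipAt {n : ℕ} (x : Fin n → Bool) (i : Fin n) : Fin n → Bool :=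
  Function.update x i (!x i)

/-- Influence of the `i`-th variable of a Boolean function,
`I_i(f) = Pr_x[f(x) ≠ f(x ⊕ e_i)]` under the uniform measure. -/
noncomputable def infl {n : ℕ} (f : (Fin n → Bool) → Bool) (i : Fin n) : ℝ :=
  cubeE (fun x => if f x ≠ f (flipAt x i) then 1 else 0)

/-- Expectation of a Boolean function under the uniform measure. -/
noncomputable def meanB {n : ℕ} (f : (Fin n → Bool) → Bool) : ℝ :=
  cubeE (fun x => if f x then 1 else 0)

/-- Conditional expectation given the first `j` coordinates: `condE f j x` is the
average of `f` over all `y` agreeing with `x` in the first `j` coordinates. -/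
noncomputable def condE {n : ℕ} (f : (Fin n → Bool) → ℝ) (j : ℕ) (x : Fin n → Bool) : ℝ :=
  (∑ y : Fin n → Bool, if ∀ k : Fin n, (k : ℕ) < j → y k = x k then f y else 0) / 2 ^ (n - j)

/-- The Dirichlet form `E(f,f) = E_x Σ_i (f(x) - f(x ⊕ e_i))²`. -/
noncomputable def energy {n : ℕ} (f : (Fin n → Bool) → ℝ) : ℝ :=
  cubeE (fun x => ∑ i : Fin n, (f x - f (flipAt x i)) ^ 2)

/-- Entropy of a nonnegative function: `Ent(g) = E[g log g] - E g · log E g`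
(the convention `0 log 0 = 0` holds since `Real.log 0 = 0`). -/
noncomputable def ent {n : ℕ} (g : (Fin n → Bool) → ℝ) : ℝ :=
  cubeE (fun x => g x * Real.log (g x)) - cubeE g * Real.log (cubeE g)

/-!
Falik and Samorodnitsky's argument. Split `f` into its even part `u` and its odd part `v` in the
first coordinate, both regarded as functions of the remaining coordinates. Then
`Var f = Var u + E v²`, `E |v| = E |D₁ f| / 2`, the Dirichlet form of `f` dominates the sum of
those of `u` and `v`, and by the logarithmic Sobolev inequality
`energy v ≥ 2 · E v² · log (E v² / (E |v|)²)`. Iterating on `u`, whose influences are at most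
those of `f`, writes the variance as a sum of terms `E v²`, and it remains to add up the lower
bounds. Replacing each `a log (a / b)` by `(t + 1) a - exp t · b`, of which it is the supremum
over `t`, makes them linear with one `t` common to all coordinates, so that the summation is an
induction on the dimension, after which `t` is optimized.
-/

/-! ### The two-point inequality -/

lemma log_sub_log_one_sub_le {p : ℝ} (hp : 1 / 2 ≤ p) (hp₁ : p < 1) :
    Real.log p - Real.log (1 - p) ≤ (2 * p - 1) / √(p * (1 - p)) := by
  have hmem : 2 * p - 1 ∈ Set.Ioo (-1 : ℝ) 1 := by constructor <;> linarith
  have artanh_eq : Real.artanh (2 * p - 1) = (Real.log p - Real.log (1 - p)) / 2 := by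
    have hratio : (1 + (2 * p - 1)) / (1 - (2 * p - 1)) = p / (1 - p) := by
      rw [show 1 + (2 * p - 1) = 2 * p by ring, show 1 - (2 * p - 1) = 2 * (1 - p) by ring,
        mul_div_mul_left _ _ two_ne_zero]
    rw [Real.artanh_eq_half_log (Set.Ioo_subset_Icc_self hmem), hratio,
      Real.log_div (by linarith) (by linarith)]
    ring
  have sinh_eq : Real.sinh (Real.artanh (2 * p - 1)) = (2 * p - 1) / √(p * (1 - p)) / 2 := by
    rw [Real.sinh_artanh hmem, show 1 - (2 * p - 1) ^ 2 = 2 ^ 2 * (p * (1 - p)) by ring,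
      Real.sqrt_mul (by positivity), Real.sqrt_sq zero_le_two, div_div, mul_comm √_]
  have artanh_nonneg : 0 ≤ Real.artanh (2 * p - 1) := by
    have := Real.log_le_log (by linarith : 0 < 1 - p) (by linarith : 1 - p ≤ p)
    linarith
  have := Real.self_le_sinh_iff.2 artanh_nonneg
  linarith

lemma monotoneOn_binEntropy_sub_two_mul_sqrt :
    MonotoneOn (fun p ↦ Real.binEntropy p - 2 * √(p * (1 - p))) (Set.Icc (1 / 2) 1) := by
  have hderiv (p : ℝ) (hp : p ∈ Set.Ioo (1 / 2 : ℝ) 1) :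
      HasDerivAt (fun p ↦ Real.binEntropy p - 2 * √(p * (1 - p)))
        ((2 * p - 1) / √(p * (1 - p)) - (Real.log p - Real.log (1 - p))) p := by
    have hpos : 0 < p * (1 - p) := mul_pos (by linarith [hp.1]) (by linarith [hp.2])
    have hmul : HasDerivAt (fun p : ℝ ↦ p * (1 - p)) (1 - 2 * p) p :=
      ((hasDerivAt_id' p).mul ((hasDerivAt_id' p).const_sub 1)).congr_deriv (by ring)
    refine ((Real.hasDerivAt_binEntropy (by linarith [hp.1]) hp.2.ne).sub
      ((hmul.sqrt hpos.ne').const_mul 2)).congr_deriv ?_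
    field_simp
    ring
  refine monotoneOn_of_hasDerivWithinAt_nonneg (convex_Icc _ _) (by fun_prop)
    (fun p hp ↦ (hderiv p (by rwa [interior_Icc] at hp)).hasDerivWithinAt) fun p hp ↦ ?_
  rw [interior_Icc] at hp
  exact sub_nonneg.2 (log_sub_log_one_sub_le hp.1.le hp.2)

lemma log_two_sub_binEntropy_le {p : ℝ} (hp : p ∈ Set.Icc (0 : ℝ) 1) :
    Real.log 2 - Real.binEntropy p ≤ 1 - 2 * √(p * (1 - p)) := by
  wlog hhalf : 1 / 2 ≤ p generalizing p
  · have := this (p := 1 - p) ⟨by linarith [hp.2], by linarith [hp.1]⟩ (by linarith)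
    rwa [Real.binEntropy_one_sub, sub_sub_cancel, mul_comm (1 - p)] at this
  have hmono := monotoneOn_binEntropy_sub_two_mul_sqrt ⟨le_rfl, by norm_num⟩ ⟨hhalf, hp.2⟩ hhalf
  have hsqrt : √(1 / 2 * (1 - 1 / 2)) = 1 / 2 := by
    rw [show (1 / 2 * (1 - 1 / 2) : ℝ) = (1 / 2) ^ 2 by norm_num, Real.sqrt_sq (by norm_num)]
  simp only [one_div, Real.binEntropy_two_inv] at hmono hsqrt
  linarith [hsqrt]

lemma negMulLog_half_sub_eq (s p : ℝ) :
    Real.negMulLog (s / 2) - (Real.negMulLog (s * p) + Real.negMulLog (s * (1 - p))) / 2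
      = s / 2 * (Real.log 2 - Real.binEntropy p) := by
  have hhalf : Real.negMulLog 2⁻¹ = Real.log 2 / 2 := by
    rw [Real.negMulLog, Real.log_inv]
    ring
  rw [div_eq_mul_inv s, Real.negMulLog_mul, Real.negMulLog_mul, Real.negMulLog_mul, hhalf,
    Real.binEntropy_eq_negMulLog_add_negMulLog_one_sub]
  ring

lemma two_point_log_sobolev {x y : ℝ} (hx : 0 ≤ x) (hy : 0 ≤ y) :
    (x * Real.log x + y * Real.log y) / 2 - (x + y) / 2 * Real.log ((x + y) / 2)
      ≤ (√x - √y) ^ 2 / 2 := by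
  obtain hs | hs := (add_nonneg hx hy).eq_or_lt
  · obtain ⟨rfl, rfl⟩ := (add_eq_zero_iff_of_nonneg hx hy).1 hs.symm
    simp
  set s := x + y with hs_def
  obtain ⟨p, hp⟩ : ∃ p, x = s * p := ⟨x / s, by field_simp⟩
  have hq : y = s * (1 - p) := by linarith [hs_def]
  have hp_mem : p ∈ Set.Icc (0 : ℝ) 1 :=
    ⟨nonneg_of_mul_nonneg_right (hp ▸ hx) hs,
      sub_nonneg.1 (nonneg_of_mul_nonneg_right (hq ▸ hy) hs)⟩
  have hsqrt : √x * √y = s * √(p * (1 - p)) := by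
    rw [← Real.sqrt_mul hx, hp, hq, mul_mul_mul_comm, Real.sqrt_mul (by positivity),
      Real.sqrt_mul_self hs.le]
  calc (x * Real.log x + y * Real.log y) / 2 - s / 2 * Real.log (s / 2)
      = Real.negMulLog (s / 2) - (Real.negMulLog x + Real.negMulLog y) / 2 := by
        simp only [Real.negMulLog]
        ring
    _ = s / 2 * (Real.log 2 - Real.binEntropy p) := by
        rw [hp, hq, negMulLog_half_sub_eq]
    _ ≤ s / 2 * (1 - 2 * √(p * (1 - p))) :=
        mul_le_mul_of_nonneg_left (log_two_sub_binEntropy_le hp_mem) (by positivity)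
    _ = (√x - √y) ^ 2 / 2 := by
        rw [sub_sq, Real.sq_sqrt hx, Real.sq_sqrt hy]
        linarith

/-! ### Expectation on the cube -/

section Cube

open scoped BigOperators

variable {n : ℕ}

lemma cubeE_eq_expect (f : (Fin n → Bool) → ℝ) : cubeE f = 𝔼 x, f x := by
  simp [cubeE, Fintype.expect_eq_sum_div_card]

lemma cubeE_zero (f : (Fin 0 → Bool) → ℝ) : cubeE f = f ![] := by
  simp only [cubeE, Fintype.sum_unique, pow_zero, div_one]
  exact congrArg f (Subsingleton.elim _ _)

lemma cubeE_add (f g : (Fin n → Bool) → ℝ) :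
    cubeE (fun x ↦ f x + g x) = cubeE f + cubeE g := by
  simp only [cubeE_eq_expect, expect_add_distrib]

lemma cubeE_sub (f g : (Fin n → Bool) → ℝ) :
    cubeE (fun x ↦ f x - g x) = cubeE f - cubeE g := by
  simp only [cubeE_eq_expect, expect_sub_distrib]

lemma cubeE_const_mul (c : ℝ) (f : (Fin n → Bool) → ℝ) :
    cubeE (fun x ↦ c * f x) = c * cubeE f := by
  simp only [cubeE_eq_expect, mul_expect]

lemma cubeE_div_const (f : (Fin n → Bool) → ℝ) (c : ℝ) :
    cubeE (fun x ↦ f x / c) = cubeE f / c := by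
  simp only [cubeE_eq_expect, expect_div]

lemma cubeE_sum {ι : Type*} (s : Finset ι) (f : ι → (Fin n → Bool) → ℝ) :
    cubeE (fun x ↦ ∑ i ∈ s, f i x) = ∑ i ∈ s, cubeE (f i) := by
  simp only [cubeE_eq_expect, expect_sum_comm]

lemma cubeE_mono {f g : (Fin n → Bool) → ℝ} (h : ∀ x, f x ≤ g x) : cubeE f ≤ cubeE g := by
  simpa only [cubeE_eq_expect] using expect_le_expect fun x _ ↦ h x

lemma cubeE_nonneg {f : (Fin n → Bool) → ℝ} (h : ∀ x, 0 ≤ f x) : 0 ≤ cubeE f := by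
  simpa only [cubeE_eq_expect] using expect_nonneg fun x _ ↦ h x

lemma cubeE_pos {f : (Fin n → Bool) → ℝ} (h : ∀ x, 0 ≤ f x) (hpos : ∃ x, 0 < f x) :
    0 < cubeE f := by
  rw [cubeE_eq_expect]
  exact expect_pos' (fun x _ ↦ h x) (by simpa using hpos)

lemma cubeE_mul_le_sqrt_mul_sqrt (f g : (Fin n → Bool) → ℝ) :
    cubeE (fun x ↦ f x * g x) ≤ √(cubeE fun x ↦ f x ^ 2) * √(cubeE fun x ↦ g x ^ 2) := by
  rw [← Real.sqrt_mul (cubeE_nonneg fun x ↦ sq_nonneg _)]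
  refine Real.le_sqrt_of_sq_le ?_
  simpa only [cubeE_eq_expect] using expect_mul_sq_le_sq_mul_sq univ f g

lemma sq_sqrt_sub_sqrt_le_cubeE_sq_sub (f g : (Fin n → Bool) → ℝ) :
    (√(cubeE fun x ↦ f x ^ 2) - √(cubeE fun x ↦ g x ^ 2)) ^ 2
      ≤ cubeE fun x ↦ (f x - g x) ^ 2 := by
  have hexpand : cubeE (fun x ↦ (f x - g x) ^ 2)
      = cubeE (fun x ↦ f x ^ 2) - 2 * cubeE (fun x ↦ f x * g x) + cubeE fun x ↦ g x ^ 2 := by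
    simp only [sub_sq, cubeE_add, cubeE_sub, mul_assoc, cubeE_const_mul]
  rw [hexpand, sub_sq, Real.sq_sqrt (cubeE_nonneg fun x ↦ sq_nonneg _),
    Real.sq_sqrt (cubeE_nonneg fun x ↦ sq_nonneg _)]
  linarith [cubeE_mul_le_sqrt_mul_sqrt f g]

/-! ### Splitting off the first coordinate -/

/-- The restriction of `f` to the face of the cube on which the first coordinate is `b`. -/
abbrev face (f : (Fin (n + 1) → Bool) → ℝ) (b : Bool) : (Fin n → Bool) → ℝ :=
  fun x ↦ f (Fin.cons b x)

lemma flipAt_cons_zero (b : Bool) (x : Fin n → Bool) :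
    flipAt (Fin.cons b x : Fin (n + 1) → Bool) 0 = Fin.cons (!b) x := by
  simp [flipAt]

lemma flipAt_cons_succ (b : Bool) (x : Fin n → Bool) (i : Fin n) :
    flipAt (Fin.cons b x : Fin (n + 1) → Bool) i.succ = Fin.cons b (flipAt x i) := by
  simp [flipAt, Fin.cons_update]

lemma cubeE_succ (f : (Fin (n + 1) → Bool) → ℝ) :
    cubeE f = (cubeE (face f false) + cubeE (face f true)) / 2 := by
  have hsum : ∑ x, f x = ∑ p : Bool × (Fin n → Bool), f (Fin.cons p.1 p.2) :=
    (Fintype.sum_equiv (Fin.consEquiv fun _ ↦ Bool) _ _ fun _ ↦ rfl).symm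
  simp only [cubeE, face, hsum, Fintype.sum_prod_type, Fintype.sum_bool, pow_succ]
  ring

lemma energy_succ (f : (Fin (n + 1) → Bool) → ℝ) :
    energy f = (energy (face f false) + energy (face f true)) / 2
      + cubeE fun x ↦ (face f false x - face f true x) ^ 2 := by
  rw [energy, cubeE_succ]
  simp only [energy, Fin.sum_univ_succ, flipAt_cons_zero, flipAt_cons_succ, Bool.not_false,
    Bool.not_true, cubeE_add, sub_sq_comm (f (Fin.cons true _)) (f (Fin.cons false _))]
  ring

lemma ent_succ (g : (Fin (n + 1) → Bool) → ℝ) :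
    ent g = (ent (face g false) + ent (face g true)) / 2
      + ((cubeE (face g false) * Real.log (cubeE (face g false))
          + cubeE (face g true) * Real.log (cubeE (face g true))) / 2
        - (cubeE (face g false) + cubeE (face g true)) / 2
          * Real.log ((cubeE (face g false) + cubeE (face g true)) / 2)) := by
  rw [ent, cubeE_succ g, cubeE_succ fun x ↦ g x * Real.log (g x)]
  simp only [ent]
  ring

/-! ### Logarithmic Sobolev inequality -/

theorem log_sobolev (f : (Fin n → Bool) → ℝ) : ent (fun x ↦ f x ^ 2) ≤ energy f / 2 := by
  induction n with
  | zero => simp [ent, energy, cubeE_zero]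
  | succ n ih =>
    have htwo := (two_point_log_sobolev (cubeE_nonneg fun x ↦ sq_nonneg (face f false x))
      (cubeE_nonneg fun x ↦ sq_nonneg (face f true x))).trans
        (div_le_div_of_nonneg_right (sq_sqrt_sub_sqrt_le_cubeE_sq_sub _ _) zero_le_two)
    have hfalse := ih (face f false)
    have htrue := ih (face f true)
    rw [ent_succ, energy_succ]
    linarith

lemma two_mul_log_add_one_mul_sq_sub_le (a : ℝ) {c : ℝ} (hc : 0 < c) :
    2 * (Real.log c + 1) * a ^ 2 - 2 * c * |a| ≤ a ^ 2 * Real.log (a ^ 2) := by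
  obtain rfl | ha := eq_or_ne a 0
  · simp
  have habs : 0 < |a| := abs_pos.2 ha
  have hlog : Real.log c - Real.log |a| ≤ c / |a| - 1 := by
    rw [← Real.log_div hc.ne' habs.ne']
    exact Real.log_le_sub_one_of_pos (by positivity)
  have hmul := mul_le_mul_of_nonneg_left hlog (by positivity : 0 ≤ 2 * |a| ^ 2)
  have hcancel : 2 * |a| ^ 2 * (c / |a| - 1) = 2 * c * |a| - 2 * |a| ^ 2 := by field_simp
  rw [← sq_abs, Real.log_pow, Nat.cast_ofNat]
  linarith

lemma cubeE_sq_mul_log_div_le_ent (f : (Fin n → Bool) → ℝ) :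
    cubeE (fun x ↦ f x ^ 2) * Real.log (cubeE (fun x ↦ f x ^ 2) / cubeE (fun x ↦ |f x|) ^ 2)
      ≤ ent fun x ↦ f x ^ 2 := by
  by_cases hf : ∀ x, f x = 0
  · simp [hf, ent, cubeE]
  push Not at hf
  set M := cubeE fun x ↦ f x ^ 2
  set K := cubeE fun x ↦ |f x|
  have hM : 0 < M := cubeE_pos (fun x ↦ sq_nonneg _) (hf.imp fun x hx ↦ by positivity)
  have hK : 0 < K := cubeE_pos (fun x ↦ abs_nonneg _) (hf.imp fun x hx ↦ by positivity)
  -- `M / K` is the value of `c` that maximizes the mean of the tangent bound.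
  have htangent : 2 * (Real.log (M / K) + 1) * M - 2 * (M / K) * K
      ≤ cubeE fun x ↦ f x ^ 2 * Real.log (f x ^ 2) := by
    rw [← cubeE_const_mul, ← cubeE_const_mul, ← cubeE_sub]
    exact cubeE_mono fun x ↦ two_mul_log_add_one_mul_sq_sub_le (f x) (by positivity)
  have hcancel : 2 * (M / K) * K = 2 * M := by field_simp
  rw [hcancel, Real.log_div hM.ne' hK.ne'] at htangent
  rw [ent, Real.log_div hM.ne' (by positivity), Real.log_pow, Nat.cast_ofNat]
  linarith

lemma add_one_mul_sub_exp_mul_le_mul_log_div {a b : ℝ} (ha : 0 ≤ a) (hb : 0 < b) (t : ℝ) :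
    (t + 1) * a - Real.exp t * b ≤ a * Real.log (a / b) := by
  obtain rfl | ha := ha.eq_or_lt
  · simp only [mul_zero, zero_sub, zero_mul, Left.neg_nonpos_iff]
    positivity
  have hlog := Real.log_le_sub_one_of_pos (by positivity : 0 < Real.exp t * (b / a))
  rw [Real.log_mul (by positivity) (by positivity), Real.log_exp, ← inv_div, Real.log_inv] at hlog
  have hmul := mul_le_mul_of_nonneg_left hlog ha.le
  have hcancel : a * (Real.exp t * (a / b)⁻¹ - 1) = Real.exp t * b - a := by field_simp
  linarith

lemma add_one_mul_cubeE_sq_sub_le_energy (f : (Fin n → Bool) → ℝ) (t : ℝ) :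
    (t + 1) * cubeE (fun x ↦ f x ^ 2) - Real.exp t * cubeE (fun x ↦ |f x|) ^ 2
      ≤ energy f / 2 := by
  by_cases hf : ∀ x, f x = 0
  · simp [hf, energy, cubeE]
  push Not at hf
  have hpos : 0 < cubeE fun x ↦ |f x| :=
    cubeE_pos (fun x ↦ abs_nonneg _) (hf.imp fun x hx ↦ by positivity)
  exact (add_one_mul_sub_exp_mul_le_mul_log_div (cubeE_nonneg fun x ↦ sq_nonneg _)
    (by positivity) t).trans ((cubeE_sq_mul_log_div_le_ent f).trans (log_sobolev f))

/-! ### Falik–Samorodnitsky inequality -/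

/-- The variance of a function on the cube under the uniform measure. -/
noncomputable def cubeVar (f : (Fin n → Bool) → ℝ) : ℝ :=
  cubeE (fun x ↦ f x ^ 2) - cubeE f ^ 2

/-- The `L¹` influence `E|f(x) - f(x ⊕ e_i)|` of the `i`-th variable, which extends `infl` from
Boolean to real-valued functions. -/
noncomputable def inflL1 (f : (Fin n → Bool) → ℝ) (i : Fin n) : ℝ :=
  cubeE fun x ↦ |f x - f (flipAt x i)|

/-- The even part of `f` in its first coordinate, as a function of the remaining coordinates: the
average of `f` over the first coordinate. -/
noncomputable def headMean (f : (Fin (n + 1) → Bool) → ℝ) : (Fin n → Bool) → ℝ :=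
  fun x ↦ (face f false x + face f true x) / 2

/-- The odd part of `f` in its first coordinate, as a function of the remaining coordinates; the
sign is chosen so that it is the value on the face where the first coordinate is `false`. -/
noncomputable def headDiff (f : (Fin (n + 1) → Bool) → ℝ) : (Fin n → Bool) → ℝ :=
  fun x ↦ (face f false x - face f true x) / 2

lemma cubeE_headMean (f : (Fin (n + 1) → Bool) → ℝ) : cubeE (headMean f) = cubeE f := by
  rw [cubeE_succ, ← cubeE_add, ← cubeE_div_const]
  rfl

lemma cubeVar_succ (f : (Fin (n + 1) → Bool) → ℝ) :
    cubeVar f = cubeVar (headMean f) + cubeE fun x ↦ headDiff f x ^ 2 := by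
  have hsq : cubeE (fun x ↦ f x ^ 2)
      = cubeE (fun x ↦ headMean f x ^ 2) + cubeE fun x ↦ headDiff f x ^ 2 := by
    rw [cubeE_succ, ← cubeE_add, ← cubeE_add, ← cubeE_div_const]
    congr 1 with x
    simp only [face, headMean, headDiff]
    ring
  rw [cubeVar, cubeVar, cubeE_headMean, hsq]
  ring

lemma energy_headMean_add_energy_headDiff_le (f : (Fin (n + 1) → Bool) → ℝ) :
    energy (headMean f) + energy (headDiff f) ≤ energy f := by
  have hparallelogram : energy (headMean f) + energy (headDiff f)
      = (energy (face f false) + energy (face f true)) / 2 := by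
    simp only [energy, ← cubeE_add, ← cubeE_div_const, ← sum_add_distrib, sum_div]
    congr! 3 with x i
    simp only [headMean, headDiff]
    ring
  rw [energy_succ, hparallelogram]
  exact le_add_of_nonneg_right (cubeE_nonneg fun x ↦ sq_nonneg _)

lemma inflL1_nonneg (f : (Fin n → Bool) → ℝ) (i : Fin n) : 0 ≤ inflL1 f i :=
  cubeE_nonneg fun _ ↦ abs_nonneg _

lemma inflL1_zero (f : (Fin (n + 1) → Bool) → ℝ) :
    inflL1 f 0 = 2 * cubeE fun x ↦ |headDiff f x| := by
  rw [inflL1, cubeE_succ, ← cubeE_add, ← cubeE_div_const, ← cubeE_const_mul]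
  congr 1 with x
  simp only [face, headDiff, flipAt_cons_zero, Bool.not_false, Bool.not_true, abs_div, abs_two,
    abs_sub_comm (f (Fin.cons true x))]
  ring

lemma inflL1_headMean_le (f : (Fin (n + 1) → Bool) → ℝ) (i : Fin n) :
    inflL1 (headMean f) i ≤ inflL1 f i.succ := by
  simp only [inflL1, cubeE_succ (fun x ↦ |f x - _|), ← cubeE_add, ← cubeE_div_const]
  refine cubeE_mono fun x ↦ ?_
  simp only [face, headMean, flipAt_cons_succ]
  rw [← sub_div, abs_div, abs_two, add_sub_add_comm]
  gcongr
  exact abs_add_le _ _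

theorem falik_samorodnitsky (f : (Fin n → Bool) → ℝ) (t : ℝ) :
    (t + 1) * cubeVar f - Real.exp t / 4 * ∑ i, inflL1 f i ^ 2 ≤ energy f / 2 := by
  induction n with
  | zero => simp [cubeVar, energy, cubeE_zero]
  | succ n ih =>
    have hmean := ih (headMean f)
    have hdiff := add_one_mul_cubeE_sq_sub_le_energy (headDiff f) t
    have henergy := energy_headMean_add_energy_headDiff_le f
    have hinfl : Real.exp t / 4 * ∑ i, inflL1 (headMean f) i ^ 2
        ≤ Real.exp t / 4 * ∑ i : Fin n, inflL1 f i.succ ^ 2 := by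
      gcongr with i
      · exact inflL1_nonneg _ i
      · exact inflL1_headMean_le f i
    rw [cubeVar_succ, Fin.sum_univ_succ, inflL1_zero]
    linarith

theorem sum_sq_influences_exp_lower_bound_general (f : (Fin n → Bool) → ℝ) (hf : 0 < cubeVar f) :
    4 * cubeVar f * Real.exp (-(1 / (2 * cubeVar f)) * energy f) ≤ ∑ i, inflL1 f i ^ 2 := by
  set t := 1 / (2 * cubeVar f) * energy f with ht
  have hfs := falik_samorodnitsky f t
  have htvar : (t + 1) * cubeVar f = energy f / 2 + cubeVar f := by
    rw [ht]
    field_simp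
  rw [neg_mul, Real.exp_neg, ← div_eq_mul_inv, div_le_iff₀ (Real.exp_pos _)]
  linarith

/-- A Boolean function regarded as a real-valued function with values in `{0, 1}`. -/
def boolToReal (f : (Fin n → Bool) → Bool) : (Fin n → Bool) → ℝ :=
  fun x ↦ if f x then 1 else 0

lemma cubeVar_boolToReal (f : (Fin n → Bool) → Bool) :
    cubeVar (boolToReal f) = meanB f * (1 - meanB f) := by
  have hsq : (fun x ↦ boolToReal f x ^ 2) = boolToReal f := by
    funext x
    simp [boolToReal]
  rw [cubeVar, hsq, show cubeE (boolToReal f) = meanB f from rfl]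
  ring

lemma inflL1_boolToReal (f : (Fin n → Bool) → Bool) : inflL1 (boolToReal f) = infl f := by
  funext i
  rw [inflL1, infl]
  congr 1 with x
  cases hx : f x <;> cases hy : f (flipAt x i) <;> simp [boolToReal, hx, hy]

lemma energy_boolToReal (f : (Fin n → Bool) → Bool) :
    energy (boolToReal f) = ∑ i, infl f i := by
  rw [energy, cubeE_sum]
  refine sum_congr rfl fun i _ ↦ ?_
  rw [infl]
  congr 1 with x
  cases hx : f x <;> cases hy : f (flipAt x i) <;> simp [boolToReal, hx, hy]

end Cube

/-- For every Boolean function `f` on `{0,1}^n` with expectation `μ ∈ (0,1)`,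
`Σ_i I_i(f)² ≥ 4 μ(1-μ) · exp(-(1/(2μ(1-μ))) Σ_i I_i(f))`. -/
theorem sum_sq_influences_exp_lower_bound {n : ℕ} (f : (Fin n → Bool) → Bool)
    (h0 : 0 < meanB f) (h1 : meanB f < 1) :
    ∑ i : Fin n, (infl f i) ^ 2 ≥
      4 * meanB f * (1 - meanB f) *
        Real.exp (-(1 / (2 * meanB f * (1 - meanB f))) * ∑ i : Fin n, infl f i) := by
  have hvar : 0 < cubeVar (boolToReal f) :=
    cubeVar_boolToReal f ▸ mul_pos h0 (sub_pos.2 h1)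
  simpa only [cubeVar_boolToReal, inflL1_boolToReal, energy_boolToReal, mul_assoc] using
    sum_sq_influences_exp_lower_bound_general (boolToReal f) hvar
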